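/- For any ADF D, the grounded interpretation grd(D) is a strongly admissible interpretation of D. -/

import Mathlib

/-!
Since `Γ_D` is monotone and `A` is finite, the grounded interpretation is reached by iterating
`Γ_D` from the trivial interpretation `v_u` (`IsGrounded.exists_iter_eq`). Give every decided
argument as rank the stage at which it is first decided. If `a` has rank `n + 1`, its
justifying set `P` can be taken to consist of the parents of `a` already decided at stage `n`, all
of smaller rank. Ranks strictly decrease along justifications, so none of the arguments excluded so
far, all of rank at least that of `a`, lies in `P`; induction on the rank then gives strong
acceptability or deniability (`sjrel_of_decided`), with `S` the set of all arguments.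
-/

/-- Three truth values: true, false, undecided. -/
inductive TV : Type
  | t | f | u
deriving DecidableEq, Repr

/-- The information order on truth values: u <_i t and u <_i f. -/
def TV.ile (x y : TV) : Prop := x = TV.u ∨ x = y

/-- The information order on interpretations, extended pointwise. -/
def ILE {A : Type*} (v w : A → TV) : Prop := ∀ a, TV.ile (v a) (w a)

/-- An abstract dialectical framework on a set of arguments `A`:
each argument `a` has an acceptance condition `C a : (A → Bool) → Bool`. -/
structure ADF (A : Type*) where
  C : A → (A → Bool) → Bool

/-- The trivial interpretation mapping every argument to undecided. -/
def trivialInterp (A : Type*) : A → TV := fun _ => TV.u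

/-- The parents of `a` are the arguments on which its acceptance condition depends. -/
def ADF.parents {A : Type*} [DecidableEq A] (D : ADF A) (a : A) : Set A :=
  {b | ∃ w : A → Bool, D.C a w ≠ D.C a (Function.update w b (!w b))}

/-- A two-valued assignment `w` completes a three-valued interpretation `v`. -/
def Completes {A : Type*} (w : A → Bool) (v : A → TV) : Prop :=
  ∀ b, (v b = TV.t → w b = true) ∧ (v b = TV.f → w b = false)

/-- `φ` is irrefutable under `v`: every completion of `v` makes `φ` true. -/
def Irrefutable {A : Type*} (φ : (A → Bool) → Bool) (v : A → TV) : Prop :=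
  ∀ w : A → Bool, Completes w v → φ w = true

/-- `φ` is unsatisfiable under `v`: every completion of `v` makes `φ` false. -/
def Unsat {A : Type*} (φ : (A → Bool) → Bool) (v : A → TV) : Prop :=
  ∀ w : A → Bool, Completes w v → φ w = false

open Classical in
/-- The characteristic operator Γ_D of an ADF. -/
noncomputable def Gamma {A : Type*} (D : ADF A) (v : A → TV) : A → TV := fun a =>
  if Irrefutable (D.C a) v then TV.t
  else if Unsat (D.C a) v then TV.f
  else TV.u

open Classical in
/-- `v|_P`: agrees with `v` on `P` and is undecided elsewhere. -/
noncomputable def restrictTV {A : Type*} (v : A → TV) (P : Set A) : A → TV :=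
  fun b => if b ∈ P then v b else TV.u

/-- Strong acceptability/deniability of an argument with respect to interpretation `v`
and set `S`, relative to an excluded set `E` (the first index). An argument `a` with
`v a = t` (resp. `v a = f`) is strongly acceptable (resp. strongly deniable) iff there is
`P ⊆ (parents a ∩ S) \ E` with `φ_a^{v|_P}` irrefutable (resp. unsatisfiable) and every
`p ∈ P` strongly acceptable/deniable relative to `E ∪ {p}`. -/
inductive SJrel {A : Type*} [DecidableEq A] (D : ADF A) (v : A → TV) (S : Set A) :
    Set A → A → Prop
  | acc (E : Set A) (a : A) (P : Set A)
      (ha : v a = TV.t)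
      (hP : P ⊆ (D.parents a ∩ S) \ E)
      (hirr : Irrefutable (D.C a) (restrictTV v P))
      (hrec : ∀ p ∈ P, SJrel D v S (E ∪ {p}) p) : SJrel D v S E a
  | den (E : Set A) (a : A) (P : Set A)
      (ha : v a = TV.f)
      (hP : P ⊆ (D.parents a ∩ S) \ E)
      (hunsat : Unsat (D.C a) (restrictTV v P))
      (hrec : ∀ p ∈ P, SJrel D v S (E ∪ {p}) p) : SJrel D v S E a

/-- `a` is strongly acceptable/deniable w.r.t. `v` and `S`
(i.e., relative to the excluded set `{a}`). -/
def StronglyJustified {A : Type*} [DecidableEq A] (D : ADF A) (v : A → TV)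
    (S : Set A) (a : A) : Prop :=
  SJrel D v S {a} a

/-- `S` is a least set for `a` with respect to `v`. -/
def LeastSet {A : Type*} [DecidableEq A] (D : ADF A) (v : A → TV)
    (a : A) (S : Set A) : Prop :=
  StronglyJustified D v S a ∧
  ∀ S' : Set A, S'.ncard < S.ncard → ¬ StronglyJustified D v S' a

/-- An interpretation is strongly admissible iff every argument assigned `t`/`f`
is strongly acceptable/deniable w.r.t. `v` and some set `S`. -/
def StronglyAdmissible {A : Type*} [DecidableEq A] (D : ADF A) (v : A → TV) : Prop :=
  ∀ a : A, v a ≠ TV.u → ∃ S : Set A, StronglyJustified D v S a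

/-- `g` is the grounded interpretation of `D`: the least fixed point of `Γ_D`. -/
def IsGrounded {A : Type*} (D : ADF A) (g : A → TV) : Prop :=
  Gamma D g = g ∧ ∀ w : A → TV, Gamma D w = w → ILE g w

/-- An interpretation is admissible iff `v ≤_i Γ_D(v)`. -/
def Admissible {A : Type*} (D : ADF A) (v : A → TV) : Prop :=
  ILE v (Gamma D v)

/-- An interpretation is conflict-free. -/
def ConflictFree {A : Type*} (D : ADF A) (v : A → TV) : Prop :=
  ∀ a : A, (v a = TV.t → ∃ w : A → Bool, Completes w v ∧ D.C a w = true) ∧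
           (v a = TV.f → Unsat (D.C a) v)

/-- The join of two interpretations: take `v`'s value where defined, else `w`'s. -/
def joinI {A : Type*} (v w : A → TV) : A → TV :=
  fun a => if v a = TV.u then w a else v a

/-- The `n`-th stage `Γ_D^n(v_u)` of the iteration of the characteristic operator from the
trivial interpretation. -/
noncomputable def iter {A : Type*} (D : ADF A) : ℕ → A → TV
  | 0 => trivialInterp A
  | n + 1 => Gamma D (iter D n)

theorem ILE.refl {A : Type*} (v : A → TV) : ILE v v := fun _ => Or.inr rfl

theorem ILE.trans {A : Type*} {u v w : A → TV} (h : ILE u v) (k : ILE v w) : ILE u w := by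
  intro a
  rcases h a with h | h
  · exact Or.inl h
  · rcases k a with k | k
    · exact Or.inl (h.trans k)
    · exact Or.inr (h.trans k)

theorem ILE.antisymm {A : Type*} {v w : A → TV} (h : ILE v w) (k : ILE w v) : v = w := by
  funext a
  rcases h a with h | h
  · rcases k a with k | k
    · exact h.trans k.symm
    · exact k.symm
  · exact h

theorem ILE.eq_of_ne {A : Type*} {v w : A → TV} (h : ILE v w) {a : A} (ha : v a ≠ TV.u) :
    w a = v a :=
  ((h a).resolve_left ha).symm

theorem Completes.mono {A : Type*} {v v' : A → TV} (h : ILE v v') {w : A → Bool}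
    (hw : Completes w v') : Completes w v := fun b =>
  ⟨fun hb => (hw b).1 ((h.eq_of_ne (by simp [hb])).trans hb),
    fun hb => (hw b).2 ((h.eq_of_ne (by simp [hb])).trans hb)⟩

theorem exists_completes {A : Type*} (v : A → TV) : ∃ w, Completes w v :=
  ⟨fun b => decide (v b = TV.t), fun b => ⟨fun h => by simp [h], fun h => by simp [h]⟩⟩

theorem gamma_eq_t {A : Type*} {D : ADF A} {v : A → TV} {a : A} :
    Gamma D v a = TV.t ↔ Irrefutable (D.C a) v := by
  unfold Gamma
  split_ifs <;> simp_all

theorem gamma_eq_f {A : Type*} {D : ADF A} {v : A → TV} {a : A} :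
    Gamma D v a = TV.f ↔ Unsat (D.C a) v := by
  unfold Gamma
  split_ifs with h1 h2
  · -- As `v` has a completion, no condition is both irrefutable and unsatisfiable.
    obtain ⟨w, hw⟩ := exists_completes v
    have := h1 w hw
    simp only [false_iff]
    intro h
    simp [h w hw] at this
  · simp [h2]
  · simp [h2]

theorem gamma_mono {A : Type*} (D : ADF A) {v w : A → TV} (h : ILE v w) :
    ILE (Gamma D v) (Gamma D w) := by
  intro a
  rcases ha : Gamma D v a with _ | _ | _
  · exact Or.inr (gamma_eq_t.2 fun x hx => gamma_eq_t.1 ha x (hx.mono h)).symm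
  · exact Or.inr (gamma_eq_f.2 fun x hx => gamma_eq_f.1 ha x (hx.mono h)).symm
  · exact Or.inl rfl

theorem iter_le_succ {A : Type*} (D : ADF A) (n : ℕ) : ILE (iter D n) (iter D (n + 1)) := by
  induction n with
  | zero => exact fun _ => Or.inl rfl
  | succ n ih => exact gamma_mono D ih

theorem iter_mono {A : Type*} (D : ADF A) {m n : ℕ} (h : m ≤ n) :
    ILE (iter D m) (iter D n) := by
  induction n, h using Nat.le_induction with
  | base => exact ILE.refl _
  | succ n _ ih => exact ih.trans (iter_le_succ D n)

theorem iter_le_fixed {A : Type*} {D : ADF A} {g : A → TV} (hg : Gamma D g = g) (n : ℕ) :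
    ILE (iter D n) g := by
  induction n with
  | zero => exact fun _ => Or.inl rfl
  | succ n ih => rw [← hg]; exact gamma_mono D ih

instance : Finite TV :=
  Finite.of_injective (fun x : TV => (decide (x = TV.t), decide (x = TV.f))) (by
    intro x y h
    cases x <;> cases y <;> simp_all)

theorem IsGrounded.exists_iter_eq {A : Type*} [Finite A] {D : ADF A} {g : A → TV}
    (hg : IsGrounded D g) : ∃ n, iter D n = g := by
  obtain ⟨i, j, hij, h⟩ := Set.finite_univ.exists_lt_map_eq_of_forall_mem
    (f := iter D) (fun _ => Set.mem_univ _)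
  have hfix : iter D (i + 1) = iter D i :=
    ILE.antisymm (h ▸ iter_mono D hij) (iter_le_succ D i)
  exact ⟨i, (iter_le_fixed hg.1 i).antisymm (hg.2 _ hfix)⟩

/-- An acceptance condition takes equal values on assignments that agree on the parents. This
uses finiteness: one assignment is turned into the other by flipping one non-parent at a time. -/
theorem condition_congr {A : Type*} [Fintype A] [DecidableEq A] (D : ADF A) (a : A)
    {w w' : A → Bool} (h : ∀ b ∈ D.parents a, w b = w' b) : D.C a w = D.C a w' := by
  have key : ∀ s : Finset A, D.C a w = D.C a (fun b => if b ∈ s then w' b else w b) := by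
    intro s
    induction s using Finset.induction_on with
    | empty => simp
    | insert c s hc ih =>
      rw [ih]
      by_cases hcw : w c = w' c
      · congr 1
        funext b
        by_cases hb : b = c
        · subst hb; simp [hcw]
        · simp [hb]
      · have hcp : c ∉ D.parents a := fun hp => hcw (h c hp)
        simp only [ADF.parents, Set.mem_ofPred_eq, not_exists, not_not] at hcp
        rw [hcp]
        congr 1
        funext b
        by_cases hb : b = c
        · subst hb
          simp only [hc, Function.update_self, Finset.mem_insert_self, if_true, if_false]
          revert hcw
          cases w b <;> cases w' b <;> simp
        · simp [hb]
  simpa using key Finset.univ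

/-- Let `v ≤_i g`. Each completion of `g` restricted to the parents of `a` decided by `v` can be
changed outside the parents into a completion of `v`, without affecting the value of `φ_a`. -/
theorem exists_completes_of_restrict {A : Type*} [Fintype A] [DecidableEq A] (D : ADF A)
    {v g : A → TV} (h : ILE v g) (a : A) {w : A → Bool}
    (hw : Completes w (restrictTV g (D.parents a ∩ {b | v b ≠ TV.u}))) :
    ∃ w', Completes w' v ∧ D.C a w = D.C a w' := by
  classical
  refine ⟨fun b => if b ∈ D.parents a then w b else decide (v b = TV.t), ?_, ?_⟩
  · intro b
    by_cases hb : b ∈ D.parents a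
    · have hwb := hw b
      by_cases hv : v b = TV.u
      · simp [hv]
      · simpa [restrictTV, hb, hv, h.eq_of_ne hv] using hwb
    · constructor <;> intro hv <;> simp [hb, hv]
  · exact condition_congr D a fun b hb => by simp [hb]

/-- Every argument decided at stage `n` is first decided at some stage `m + 1 ≤ n`. -/
theorem exists_first_decided {A : Type*} {D : ADF A} {n : ℕ} {a : A}
    (ha : iter D n a ≠ TV.u) :
    ∃ m < n, iter D m a = TV.u ∧ iter D (m + 1) a ≠ TV.u := by
  induction n with
  | zero => exact absurd rfl ha
  | succ n ih =>
    by_cases h : iter D n a = TV.u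
    · exact ⟨n, n.lt_succ_self, h, ha⟩
    · obtain ⟨m, hm, h1, h2⟩ := ih h
      exact ⟨m, hm.trans n.lt_succ_self, h1, h2⟩

/-- An argument decided at stage `n + 1` is strongly justified relative to every excluded
set whose members are all undecided at stage `n`. -/
theorem sjrel_of_decided {A : Type*} [Fintype A] [DecidableEq A] {D : ADF A} {g : A → TV}
    (hg : Gamma D g = g) (n : ℕ) : ∀ (a : A) (E : Set A), iter D (n + 1) a ≠ TV.u →
      (∀ b ∈ E, iter D n b = TV.u) → SJrel D g Set.univ E a := by
  induction n using Nat.strong_induction_on with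
  | _ n ih =>
    intro a E ha hE
    have hle := iter_le_fixed hg n
    have hga := (iter_le_fixed hg (n + 1)).eq_of_ne ha
    have hP : D.parents a ∩ {b | iter D n b ≠ TV.u} ⊆ (D.parents a ∩ Set.univ) \ E :=
      fun b hb => ⟨⟨hb.1, trivial⟩, fun hbE => hb.2 (hE b hbE)⟩
    have hrec : ∀ p ∈ D.parents a ∩ {b | iter D n b ≠ TV.u},
        SJrel D g Set.univ (E ∪ {p}) p := by
      rintro p ⟨-, hp⟩
      obtain ⟨m, hmn, hmin, hspec⟩ := exists_first_decided hp
      refine ih m hmn p _ hspec ?_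
      rintro b (hb | rfl)
      · by_contra hbm
        exact hbm (((iter_mono D hmn.le).eq_of_ne hbm).symm.trans (hE b hb))
      · exact hmin
    rcases hav : iter D (n + 1) a with _ | _ | _
    · refine SJrel.acc E a _ (hga.trans hav) hP (fun w hw => ?_) hrec
      obtain ⟨w', hw', heq⟩ := exists_completes_of_restrict D hle a hw
      exact heq.trans (gamma_eq_t.1 hav w' hw')
    · refine SJrel.den E a _ (hga.trans hav) hP (fun w hw => ?_) hrec
      obtain ⟨w', hw', heq⟩ := exists_completes_of_restrict D hle a hw
      exact heq.trans (gamma_eq_f.1 hav w' hw')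
    · exact absurd hav ha

/-- The grounded interpretation is strongly admissible. -/
theorem grounded_strongly_admissible {A : Type*} [Fintype A] [DecidableEq A]
    (D : ADF A) (g : A → TV) (hg : IsGrounded D g) :
    StronglyAdmissible D g := by
  intro a ha
  obtain ⟨n, rfl⟩ := hg.exists_iter_eq
  obtain ⟨m, -, hmin, hspec⟩ := exists_first_decided ha
  exact ⟨Set.univ, sjrel_of_decided hg.1 m a {a} hspec fun b hb => hb ▸ hmin⟩
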